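/- Suppose s(v) ≥ OPT(k,l) for every vertex v of G, and suppose X ≠ ∅ and Y ≠ ∅. Then S₂ ≥ λ₁ · ((1−α)/α) · β^{m−1}. -/

import Mathlib

open scoped BigOperators

/-- The arc relation of the oriented star `S_{k,l}` on `Fin (k+l+1)`:
vertex `0` is the center, vertices `1,…,k` are the out-leaves and
vertices `k+1,…,k+l` are the in-leaves. -/
def StarArc (k l : ℕ) (a b : Fin (k + l + 1)) : Prop :=
  (a.val = 0 ∧ 1 ≤ b.val ∧ b.val ≤ k) ∨ (b.val = 0 ∧ k + 1 ≤ a.val)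

/-- `φ` witnesses an induced copy of `S_{k,l}` in the digraph with arc relation `A`:
it is injective and maps arcs to arcs and non-arcs to non-arcs. -/
def IsStarEmb (k l : ℕ) {V : Type*} (A : V → V → Prop) (φ : Fin (k + l + 1) → V) : Prop :=
  Function.Injective φ ∧ ∀ a b, StarArc k l a b ↔ A (φ a) (φ b)

/-- `s(G)`: the probability that a uniformly random map `V(S_{k,l}) → V(G)`
induces a copy of `S_{k,l}`. -/
noncomputable def starProb (k l : ℕ) (V : Type*) [Fintype V] (A : V → V → Prop) : ℝ :=
  (Nat.card {φ : Fin (k + l + 1) → V // IsStarEmb k l A φ} : ℝ) /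
    (Fintype.card V : ℝ) ^ (k + l + 1)

/-- The probability that a uniformly random map induces a copy of `S_{k,l}`
and moreover has property `P`. -/
noncomputable def starProbOn (k l : ℕ) {V : Type*} [Fintype V] (A : V → V → Prop)
    (P : (Fin (k + l + 1) → V) → Prop) : ℝ :=
  (Nat.card {φ : Fin (k + l + 1) → V // IsStarEmb k l A φ ∧ P φ} : ℝ) /
    (Fintype.card V : ℝ) ^ (k + l + 1)

/-- `s(z→v) = Pr[φ ∈ 𝒮 | φ z = v]`. -/
noncomputable def sCond (k l : ℕ) {V : Type*} [Fintype V] (A : V → V → Prop)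
    (z : Fin (k + l + 1)) (v : V) : ℝ :=
  (Nat.card {φ : Fin (k + l + 1) → V // IsStarEmb k l A φ ∧ φ z = v} : ℝ) /
    (Fintype.card V : ℝ) ^ (k + l)

/-- `Pr[φ ∈ 𝒮 ∧ P φ | φ(c) = v]`, where `c = 0` is the center of the star. -/
noncomputable def sCondOn (k l : ℕ) {V : Type*} [Fintype V] (A : V → V → Prop) (v : V)
    (P : (Fin (k + l + 1) → V) → Prop) : ℝ :=
  (Nat.card {φ : Fin (k + l + 1) → V // IsStarEmb k l A φ ∧ φ 0 = v ∧ P φ} : ℝ) /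
    (Fintype.card V : ℝ) ^ (k + l)

open scoped Fin.NatCast in
/-- `s(v) = (s(c→v) + l·s(i→v) + k·s(o→v))/(m+1)`, where the center is `0`,
`k+1` is an in-leaf and `1` is an out-leaf. -/
noncomputable def sVert (k l : ℕ) {V : Type*} [Fintype V] (A : V → V → Prop) (v : V) : ℝ :=
  (sCond k l A 0 v + l * sCond k l A ((k + 1 : ℕ) : Fin (k + l + 1)) v
      + k * sCond k l A 1 v) / ((k : ℝ) + l + 1)

/-- `ρ(v)`: the proportion of vertices adjacent to `v`. -/
noncomputable def rho {V : Type*} [Fintype V] (A : V → V → Prop) (v : V) : ℝ :=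
  (Nat.card {u : V // A v u ∨ A u v} : ℝ) / (Fintype.card V : ℝ)

/-- `ρ⁺_B(v)`: the proportion of vertices that are out-neighbours of `v` lying in `B`. -/
noncomputable def rhoPIn {V : Type*} [Fintype V] (A : V → V → Prop) (B : Set V) (v : V) : ℝ :=
  (Nat.card {u : V // A v u ∧ u ∈ B} : ℝ) / (Fintype.card V : ℝ)

/-- `ρ⁻_B(v)`: the proportion of vertices that are in-neighbours of `v` lying in `B`. -/
noncomputable def rhoMIn {V : Type*} [Fintype V] (A : V → V → Prop) (B : Set V) (v : V) : ℝ :=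
  (Nat.card {u : V // A u v ∧ u ∈ B} : ℝ) / (Fintype.card V : ℝ)

/-- `ρ_B(v)`: the proportion of vertices adjacent to `v` lying in `B`. -/
noncomputable def rhoIn {V : Type*} [Fintype V] (A : V → V → Prop) (B : Set V) (v : V) : ℝ :=
  (Nat.card {u : V // (A v u ∨ A u v) ∧ u ∈ B} : ℝ) / (Fintype.card V : ℝ)

/-- `μ(B) = |B|/n`. -/
noncomputable def muSet {V : Type*} [Fintype V] (B : Set V) : ℝ :=
  (Nat.card B : ℝ) / (Fintype.card V : ℝ)

/-- `X`: the set of vertices of large degree, `ρ(v) ≥ 1/2`. -/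
def bigX {V : Type*} [Fintype V] (A : V → V → Prop) : Set V := {v | 1 / 2 ≤ rho A v}

/-- `Y = V(G) \ X`. -/
def bigY {V : Type*} [Fintype V] (A : V → V → Prop) : Set V := (bigX A)ᶜ

/-- `α = μ(X)`. -/
noncomputable def alphaX {V : Type*} [Fintype V] (A : V → V → Prop) : ℝ := muSet (bigX A)

/-- `D = min_{x ∈ X} ρ(x)`. -/
noncomputable def Dmin {V : Type*} [Fintype V] (A : V → V → Prop) : ℝ :=
  sInf (rho A '' bigX A)

/-- `β = max_{y ∈ Y} ρ_Y(y)`. -/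
noncomputable def betaY {V : Type*} [Fintype V] (A : V → V → Prop) : ℝ :=
  sSup ((fun y => rhoIn A (bigY A) y) '' bigY A)

/-- `γ = min_{x ∈ X} ρ⁻_Y(x)`. -/
noncomputable def gammaX {V : Type*} [Fintype V] (A : V → V → Prop) : ℝ :=
  sInf ((fun x => rhoMIn A (bigY A) x) '' bigX A)

/-- `S = (m+1)·min_{v ∈ V(G)} s(v)`. -/
noncomputable def Smin (k l : ℕ) {V : Type*} [Fintype V] (A : V → V → Prop) : ℝ :=
  ((k : ℝ) + l + 1) * sInf (Set.range (sVert k l A))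

/-- `S₁ = min_{x ∈ X} (ρ⁺_Y(x))^k (ρ⁻_Y(x))^l`. -/
noncomputable def S1min (k l : ℕ) {V : Type*} [Fintype V] (A : V → V → Prop) : ℝ :=
  sInf ((fun x => rhoPIn A (bigY A) x ^ k * rhoMIn A (bigY A) x ^ l) '' bigX A)

/-- `S₂ = S₁ − ((m−1)/((m+1)·C(m,k)))·(α+β)(1−α)(1−D)^{m−2}`. -/
noncomputable def S2min (k l : ℕ) {V : Type*} [Fintype V] (A : V → V → Prop) : ℝ :=
  S1min k l A - (((k : ℝ) + l - 1) / (((k : ℝ) + l + 1) * (Nat.choose (k + l) k : ℝ)))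
    * (alphaX A + betaY A) * (1 - alphaX A) * (1 - Dmin A) ^ (k + l - 2)

/-- `λ₀ = k^k l^l / m^m`. -/
noncomputable def lam0 (k l : ℕ) : ℝ := (k : ℝ) ^ k * (l : ℝ) ^ l / ((k : ℝ) + l) ^ (k + l)

/-- `λ₁ = k^k l (l−1)^{l−1} / (m−1)^{m−1}` (with the convention `0⁰ = 1`). -/
noncomputable def lam1 (k l : ℕ) : ℝ :=
  (k : ℝ) ^ k * (l : ℝ) * ((l : ℝ) - 1) ^ (l - 1) / ((k : ℝ) + l - 1) ^ (k + l - 1)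

/-- The edge density `ρ(Z)` of a set of vertices `Z`: the number of unordered adjacent
pairs in `Z` divided by `C(|Z|,2)`. -/
noncomputable def densSet {V : Type*} [Fintype V] (A : V → V → Prop) (Z : Set V) : ℝ :=
  ((Nat.card {p : V × V // p.1 ∈ Z ∧ p.2 ∈ Z ∧ (A p.1 p.2 ∨ A p.2 p.1)} : ℝ) / 2) /
    (Nat.choose (Nat.card Z) 2 : ℝ)

/-- `d = 1 − (E_{x ∈ X} ρ⁻_Y(x))/(1−α)`. -/
noncomputable def dXY {V : Type*} [Fintype V] (A : V → V → Prop) : ℝ :=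
  1 - ((∑ᶠ x ∈ bigX A, rhoMIn A (bigY A) x) / (Nat.card (bigX A) : ℝ)) / (1 - alphaX A)

/-- `OPT(k,l)`. -/
noncomputable def OPT (k l : ℕ) : ℝ :=
  if k = l then
    (1 / 2 ^ (2 * k)) *
      sSup {y : ℝ | ∃ a ∈ Set.Icc (0 : ℝ) 1, y = a * (1 - a) ^ (2 * k) + (1 - a) * a ^ (2 * k)}
  else
    sSup {y : ℝ | ∃ a ∈ Set.Icc (0 : ℝ) (1 / 2),
      ∃ d ∈ Set.Icc (0 : ℝ) ((k : ℝ) / ((k : ℝ) + (l : ℝ))),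
      y = a * (1 - a) ^ (k + l) * d ^ k * (1 - d) ^ l
        + (((k : ℝ) - 1) ^ (k - 1) * (l : ℝ) ^ l / ((k : ℝ) + (l : ℝ) - 1) ^ (k + l - 1))
          * (1 - a) * a ^ (k + l) * (1 - d)}

lemma amgm (p q : ℕ) (a b : ℝ) (ha : 0 ≤ a) (hb : 0 ≤ b) :
    a ^ p * b ^ q * ((p : ℝ) + q) ^ (p + q) ≤ (p : ℝ) ^ p * (q : ℝ) ^ q * (a + b) ^ (p + q) := by
  rcases Nat.eq_zero_or_pos p with hp | hp
  · subst hp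
    simp only [pow_zero, Nat.cast_zero, zero_add, one_mul]
    rw [mul_comm]
    gcongr
    linarith
  rcases Nat.eq_zero_or_pos q with hq | hq
  · subst hq
    simp only [pow_zero, Nat.cast_zero, add_zero, mul_one]
    rw [mul_comm]
    gcongr
    linarith
  have hp' : (0 : ℝ) < p := by exact_mod_cast hp
  have hq' : (0 : ℝ) < q := by exact_mod_cast hq
  have hs : (0 : ℝ) < (p : ℝ) + q := by positivity
  have h := Real.geom_mean_le_arith_mean2_weighted (w₁ := p / ((p : ℝ) + q))
    (w₂ := q / ((p : ℝ) + q)) (p₁ := a / p) (p₂ := b / q) (by positivity) (by positivity)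
    (by positivity) (by positivity) (by field_simp)
  have h2 := pow_le_pow_left₀ (by positivity) h (p + q)
  rw [mul_pow, ← Real.rpow_natCast, ← Real.rpow_natCast, ← Real.rpow_mul (by positivity),
    ← Real.rpow_mul (by positivity)] at h2
  have e1 : (p : ℝ) / ((p : ℝ) + q) * ((p + q : ℕ) : ℝ) = (p : ℝ) := by push_cast; field_simp
  have e2 : (q : ℝ) / ((p : ℝ) + q) * ((p + q : ℕ) : ℝ) = (q : ℝ) := by push_cast; field_simp
  rw [e1, e2, Real.rpow_natCast, Real.rpow_natCast] at h2
  have e3 : (p : ℝ) / ((p : ℝ) + q) * (a / p) + q / ((p : ℝ) + q) * (b / q)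
      = (a + b) / ((p : ℝ) + q) := by field_simp
  rw [e3, div_pow, div_pow, div_pow, div_mul_div_comm, div_le_div_iff₀ (by positivity)
    (by positivity)] at h2
  linarith

lemma card_le_pi {V : Type} [Fintype V] {m : ℕ} (S : (Fin m → V) → Prop)
    (T : Fin m → Finset V) (h : ∀ φ, S φ → ∀ i, φ i ∈ T i) :
    Nat.card {φ : Fin m → V // S φ} ≤ ∏ i, (T i).card := by
  classical
  rw [Nat.card_eq_fintype_card, Fintype.card_subtype, ← Fintype.card_piFinset]
  apply Finset.card_le_card
  intro φ hφ
  rw [Fintype.mem_piFinset]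
  exact h φ (by simpa using hφ)

lemma prod_one_but (k : ℕ) (z : Fin k) (a : ℝ) :
    ∏ i : Fin k, (if i = z then (1 : ℝ) else a) = a ^ (k - 1) := by
  rw [Finset.prod_ite, Finset.prod_const_one, one_mul, Finset.prod_const, Finset.filter_ne',
    Finset.card_erase_of_mem (Finset.mem_univ _), Finset.card_univ, Fintype.card_fin]

lemma prod_center (k l : ℕ) (a b : ℝ) :
    ∏ i : Fin (k + l + 1), (if i.val = 0 then (1 : ℝ) else if i.val ≤ k then a else b)
      = a ^ k * b ^ l := by
  rw [Fin.prod_univ_succ, Fin.prod_univ_add]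
  have h1 : ∀ i : Fin k, (if ((Fin.castAdd l i).succ : Fin (k + l + 1)).val = 0 then (1 : ℝ)
      else if ((Fin.castAdd l i).succ : Fin (k + l + 1)).val ≤ k then a else b) = a := by
    intro i
    have := i.isLt
    simp
  have h2 : ∀ i : Fin l, (if ((Fin.natAdd k i).succ : Fin (k + l + 1)).val = 0 then (1 : ℝ)
      else if ((Fin.natAdd k i).succ : Fin (k + l + 1)).val ≤ k then a else b) = b := by
    intro i
    have := i.isLt
    simp
  simp only [h1, h2]
  simp

lemma prod_leaf (k l : ℕ) (z : Fin (k + l + 1)) (hz : 1 ≤ z.val) (a b : ℝ) :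
    ∏ i : Fin (k + l + 1), (if i.val = 0 then (1 : ℝ) else if i = z then 1 else
      if i.val ≤ k then a else b)
      = if z.val ≤ k then a ^ (k - 1) * b ^ l else a ^ k * b ^ (l - 1) := by
  rw [Fin.prod_univ_succ, Fin.prod_univ_add]
  by_cases hk : z.val ≤ k
  · rw [if_pos hk]
    have h1 : ∀ i : Fin k, (if ((Fin.castAdd l i).succ : Fin (k + l + 1)).val = 0 then (1 : ℝ)
      else if (Fin.castAdd l i).succ = z then 1 else
        if ((Fin.castAdd l i).succ : Fin (k + l + 1)).val ≤ k then a else b)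
        = if i = ⟨z.val - 1, by omega⟩ then 1 else a := by
      intro i
      have := i.isLt
      simp only [Fin.ext_iff, Fin.val_succ, Fin.val_castAdd]
      split_ifs <;> first | rfl | omega | contradiction
    have h2 : ∀ i : Fin l, (if ((Fin.natAdd k i).succ : Fin (k + l + 1)).val = 0 then (1 : ℝ)
      else if (Fin.natAdd k i).succ = z then 1 else
        if ((Fin.natAdd k i).succ : Fin (k + l + 1)).val ≤ k then a else b) = b := by
      intro i
      have := i.isLt
      simp only [Fin.ext_iff, Fin.val_succ, Fin.val_natAdd]
      split_ifs <;> first | rfl | omega | contradiction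
    simp only [h1, h2, prod_one_but]
    simp
  · rw [if_neg hk]
    have h1 : ∀ i : Fin k, (if ((Fin.castAdd l i).succ : Fin (k + l + 1)).val = 0 then (1 : ℝ)
      else if (Fin.castAdd l i).succ = z then 1 else
        if ((Fin.castAdd l i).succ : Fin (k + l + 1)).val ≤ k then a else b)
        = a := by
      intro i
      have := i.isLt
      simp only [Fin.ext_iff, Fin.val_succ, Fin.val_castAdd]
      split_ifs <;> first | rfl | omega | contradiction
    have h2 : ∀ i : Fin l, (if ((Fin.natAdd k i).succ : Fin (k + l + 1)).val = 0 then (1 : ℝ)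
      else if (Fin.natAdd k i).succ = z then 1 else
        if ((Fin.natAdd k i).succ : Fin (k + l + 1)).val ≤ k then a else b)
        = if i = ⟨z.val - 1 - k, by omega⟩ then 1 else b := by
      intro i
      have := i.isLt
      simp only [Fin.ext_iff, Fin.val_succ, Fin.val_natAdd]
      split_ifs <;> first | rfl | omega | contradiction
    simp only [h1, h2, prod_one_but]
    simp

/-- the number of star embeddings with center `c` and leaf `z` at `v`. -/
noncomputable def cnt (k l : ℕ) {V : Type} [Fintype V] (A : V → V → Prop)
    (z : Fin (k + l + 1)) (v c : V) : ℝ :=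
  (Nat.card {φ : Fin (k + l + 1) → V // IsStarEmb k l A φ ∧ φ z = v ∧ φ 0 = c} : ℝ)

open Classical in
/-- the number of neighbours of `c` that are not neighbours of `v`. -/
noncomputable def priv {V : Type} [Fintype V] (A : V → V → Prop) (c v : V) : ℝ :=
  ((Finset.univ.filter fun u => (A c u ∨ A u c) ∧ ¬ (A v u ∨ A u v)).card : ℝ)

lemma emb_out {k l : ℕ} {V : Type} {A : V → V → Prop} {φ : Fin (k + l + 1) → V}
    (h : IsStarEmb k l A φ) (i : Fin (k + l + 1)) (h1 : 1 ≤ i.val) (h2 : i.val ≤ k) :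
    A (φ 0) (φ i) := (h.2 0 i).1 (Or.inl ⟨rfl, h1, h2⟩)

lemma emb_in {k l : ℕ} {V : Type} {A : V → V → Prop} {φ : Fin (k + l + 1) → V}
    (h : IsStarEmb k l A φ) (i : Fin (k + l + 1)) (h1 : k + 1 ≤ i.val) :
    A (φ i) (φ 0) := (h.2 i 0).1 (Or.inr ⟨rfl, h1⟩)

lemma emb_leaf {k l : ℕ} {V : Type} {A : V → V → Prop} {φ : Fin (k + l + 1) → V}
    (h : IsStarEmb k l A φ) (i j : Fin (k + l + 1)) (hi : 1 ≤ i.val) (hj : 1 ≤ j.val) :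
    ¬ A (φ i) (φ j) := by
  intro hA
  rcases (h.2 i j).2 hA with h | h <;> omega

lemma cnt_bound (k l : ℕ) {V : Type} [Fintype V] (A : V → V → Prop)
    (hopp : ∀ u v, A u v → ¬ A v u)
    (z : Fin (k + l + 1)) (hz : 1 ≤ z.val) (v c : V) :
    ∃ a b : ℝ, 0 ≤ a ∧ 0 ≤ b ∧ a + b = priv A c v ∧
      cnt k l A z v c ≤ if z.val ≤ k then a ^ (k - 1) * b ^ l else a ^ k * b ^ (l - 1) := by
  classical
  refine ⟨((Finset.univ.filter fun u => A c u ∧ ¬ (A v u ∨ A u v)).card : ℝ),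
    ((Finset.univ.filter fun u => A u c ∧ ¬ (A v u ∨ A u v)).card : ℝ), by positivity,
    by positivity, ?_, ?_⟩
  · unfold priv
    rw [← Nat.cast_add, ← Finset.card_union_of_disjoint]
    · congr 2
      ext u
      simp
      tauto
    · rw [Finset.disjoint_left]
      intro u hu hu'
      simp at hu hu'
      exact hopp _ _ hu.1 hu'.1
  · rw [← prod_leaf k l z hz]
    unfold cnt
    have := card_le_pi (V := V) (m := k + l + 1)
      (fun φ => IsStarEmb k l A φ ∧ φ z = v ∧ φ 0 = c)
      (fun i => if i.val = 0 then {c} else if i = z then {v} else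
        if i.val ≤ k then Finset.univ.filter fun u => A c u ∧ ¬ (A v u ∨ A u v)
        else Finset.univ.filter fun u => A u c ∧ ¬ (A v u ∨ A u v)) ?_
    · refine (Nat.cast_le (α := ℝ).2 this).trans (le_of_eq ?_)
      rw [Nat.cast_prod]
      apply Finset.prod_congr rfl
      intro i _
      split_ifs <;> simp
    · rintro φ ⟨h, rfl, rfl⟩ i
      split_ifs with h0 h1 h2
      · have : i = 0 := Fin.ext h0
        simp [this]
      · simp [h1]
      · simp only [Finset.mem_filter, Finset.mem_univ, true_and, not_or]
        exact ⟨emb_out h i (by omega) h2, emb_leaf h _ _ hz (by omega),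
          emb_leaf h _ _ (by omega) hz⟩
      · simp only [Finset.mem_filter, Finset.mem_univ, true_and, not_or]
        exact ⟨emb_in h i (by omega), emb_leaf h _ _ hz (by omega),
          emb_leaf h _ _ (by omega) hz⟩

/-- `κ`. -/
noncomputable def kap (k l : ℕ) : ℝ :=
  (k : ℝ) ^ k * (l : ℝ) ^ l / ((k : ℝ) + l - 1) ^ (k + l - 1)

lemma pow_pred_le (k : ℕ) (hk : 1 ≤ k) :
    (k : ℝ) * ((k - 1 : ℕ) : ℝ) ^ (k - 1) ≤ (k : ℝ) ^ k := by
  obtain ⟨j, rfl⟩ := Nat.exists_eq_add_of_le' hk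
  rw [Nat.add_sub_cancel, pow_succ, mul_comm]
  gcongr
  omega

lemma priv_nonneg {V : Type} [Fintype V] (A : V → V → Prop) (c v : V) : 0 ≤ priv A c v := by
  unfold priv; positivity

open Classical in
lemma cnt_out (k l : ℕ) (hl : 1 ≤ l) (hk : 1 ≤ k) {V : Type} [Fintype V] (A : V → V → Prop)
    (hopp : ∀ u v, A u v → ¬ A v u)
    (z : Fin (k + l + 1)) (hz : 1 ≤ z.val) (hz2 : z.val ≤ k) (v c : V) :
    k * cnt k l A z v c ≤ if A c v then kap k l * priv A c v ^ (k + l - 1) else 0 := by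
  split_ifs with h
  · obtain ⟨a, b, ha, hb, hab, hc⟩ := cnt_bound k l A hopp z hz v c
    rw [if_pos hz2] at hc
    have h1 := amgm (k - 1) l a b ha hb
    have h2 := pow_pred_le k hk
    have e : k - 1 + l = k + l - 1 := by omega
    have e' : ((k - 1 : ℕ) : ℝ) + l = (k : ℝ) + l - 1 := by rw [Nat.cast_sub hk]; push_cast; ring
    rw [e, e', hab] at h1
    have hpos : (0 : ℝ) < (k : ℝ) + l - 1 := by
      have : (1 : ℝ) ≤ k := by exact_mod_cast hk
      have : (1 : ℝ) ≤ l := by exact_mod_cast hl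
      linarith
    have hp := priv_nonneg A c v
    unfold kap
    rw [div_mul_eq_mul_div, le_div_iff₀ (by positivity)]
    calc (k : ℝ) * cnt k l A z v c * ((k : ℝ) + l - 1) ^ (k + l - 1)
        ≤ k * (a ^ (k - 1) * b ^ l) * ((k : ℝ) + l - 1) ^ (k + l - 1) := by gcongr
      _ = k * (a ^ (k - 1) * b ^ l * ((k : ℝ) + l - 1) ^ (k + l - 1)) := by ring
      _ ≤ k * (((k - 1 : ℕ) : ℝ) ^ (k - 1) * (l : ℝ) ^ l * priv A c v ^ (k + l - 1)) := by gcongr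
      _ = (k * ((k - 1 : ℕ) : ℝ) ^ (k - 1)) * (l : ℝ) ^ l * priv A c v ^ (k + l - 1) := by ring
      _ ≤ _ := by gcongr
  · unfold cnt
    have : IsEmpty {φ : Fin (k + l + 1) → V // IsStarEmb k l A φ ∧ φ z = v ∧ φ 0 = c} := by
      constructor
      rintro ⟨φ, h1, rfl, rfl⟩
      exact h (emb_out h1 z hz hz2)
    simp

open Classical in
lemma cnt_in (k l : ℕ) (hl : 1 ≤ l) (hk : 1 ≤ k) {V : Type} [Fintype V] (A : V → V → Prop)
    (hopp : ∀ u v, A u v → ¬ A v u)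
    (z : Fin (k + l + 1)) (hz2 : k + 1 ≤ z.val) (v c : V) :
    l * cnt k l A z v c ≤ if A v c then kap k l * priv A c v ^ (k + l - 1) else 0 := by
  split_ifs with h
  · obtain ⟨a, b, ha, hb, hab, hc⟩ := cnt_bound k l A hopp z (by omega) v c
    rw [if_neg (by omega)] at hc
    have h1 := amgm k (l - 1) a b ha hb
    have h2 := pow_pred_le l hl
    have e : k + (l - 1) = k + l - 1 := by omega
    have e' : (k : ℝ) + ((l - 1 : ℕ) : ℝ) = (k : ℝ) + l - 1 := by
      rw [Nat.cast_sub hl]; push_cast; ring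
    rw [e, e', hab] at h1
    have hpos : (0 : ℝ) < (k : ℝ) + l - 1 := by
      have : (1 : ℝ) ≤ k := by exact_mod_cast hk
      have : (1 : ℝ) ≤ l := by exact_mod_cast hl
      linarith
    have hp := priv_nonneg A c v
    unfold kap
    rw [div_mul_eq_mul_div, le_div_iff₀ (by positivity)]
    calc (l : ℝ) * cnt k l A z v c * ((k : ℝ) + l - 1) ^ (k + l - 1)
        ≤ l * (a ^ k * b ^ (l - 1)) * ((k : ℝ) + l - 1) ^ (k + l - 1) := by gcongr
      _ = l * (a ^ k * b ^ (l - 1) * ((k : ℝ) + l - 1) ^ (k + l - 1)) := by ring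
      _ ≤ l * ((k : ℝ) ^ k * ((l - 1 : ℕ) : ℝ) ^ (l - 1) * priv A c v ^ (k + l - 1)) := by gcongr
      _ = (k : ℝ) ^ k * (l * ((l - 1 : ℕ) : ℝ) ^ (l - 1)) * priv A c v ^ (k + l - 1) := by ring
      _ ≤ _ := by gcongr
  · unfold cnt
    have : IsEmpty {φ : Fin (k + l + 1) → V // IsStarEmb k l A φ ∧ φ z = v ∧ φ 0 = c} := by
      constructor
      rintro ⟨φ, h1, rfl, rfl⟩
      exact h (emb_in h1 z hz2)
    simp

lemma sCond_eq_sum (k l : ℕ) {V : Type} [Fintype V] (A : V → V → Prop)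
    (z : Fin (k + l + 1)) (v : V) :
    sCond k l A z v = (∑ c, cnt k l A z v c) / (Fintype.card V : ℝ) ^ (k + l) := by
  classical
  unfold sCond cnt
  congr 1
  rw [← Nat.cast_sum]
  congr 1
  simp only [Nat.card_eq_fintype_card, Fintype.card_subtype]
  rw [Finset.card_eq_sum_card_fiberwise (f := fun φ : Fin (k + l + 1) → V => φ 0)
    (t := Finset.univ) (by intro x _; simp)]
  apply Finset.sum_congr rfl
  intro c _
  rw [Finset.filter_filter]
  congr 1
  ext φ
  simp [and_assoc]

open Classical in
/-- the neighbourhood. -/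
noncomputable def nbr {V : Type} [Fintype V] (A : V → V → Prop) (v : V) : Finset V :=
  Finset.univ.filter fun u => A v u ∨ A u v

lemma rho_eq {V : Type} [Fintype V] (A : V → V → Prop) (v : V) :
    rho A v = ((nbr A v).card : ℝ) / Fintype.card V := by
  classical
  unfold rho nbr
  rw [Nat.card_eq_fintype_card, Fintype.card_subtype]

open Classical in
lemma rhoIn_eq {V : Type} [Fintype V] (A : V → V → Prop) (B : Set V) (v : V) :
    rhoIn A B v = (((nbr A v).filter (· ∈ B)).card : ℝ) / Fintype.card V := by
  unfold rhoIn nbr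
  rw [Nat.card_eq_fintype_card, Fintype.card_subtype, Finset.filter_filter]

open Classical in
lemma muSet_eq {V : Type} [Fintype V] (B : Set V) :
    muSet B = ((Finset.univ.filter (· ∈ B)).card : ℝ) / Fintype.card V := by
  unfold muSet
  rw [Nat.card_eq_fintype_card]
  congr 2
  exact Fintype.card_subtype (· ∈ B)

lemma kap_nonneg (k l : ℕ) (hl : 1 ≤ l) : 0 ≤ kap k l := by
  unfold kap
  have : (1 : ℝ) ≤ l := by exact_mod_cast hl
  have : (0 : ℝ) ≤ (k : ℝ) + l - 1 := by
    have : (0 : ℝ) ≤ k := by positivity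
    linarith
  positivity

lemma leaf_bound (k l : ℕ) (hl : 1 ≤ l) (hk : 1 ≤ k) {V : Type} [Fintype V] (A : V → V → Prop)
    (hopp : ∀ u v, A u v → ¬ A v u) (hn : 1 ≤ Fintype.card V)
    (z w : Fin (k + l + 1)) (hz : 1 ≤ z.val) (hz2 : z.val ≤ k) (hw : k + 1 ≤ w.val) (v : V)
    (B : V → ℝ) (hB : ∀ c ∈ nbr A v, priv A c v ≤ Fintype.card V * B c) :
    l * sCond k l A w v + k * sCond k l A z v
      ≤ kap k l * (∑ c ∈ nbr A v, B c ^ (k + l - 1)) / Fintype.card V := by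
  classical
  have hn' : (0 : ℝ) < Fintype.card V := by exact_mod_cast hn
  rw [sCond_eq_sum, sCond_eq_sum, ← mul_div_assoc, ← mul_div_assoc, ← add_div,
    div_le_div_iff₀ (by positivity) hn', Finset.mul_sum, Finset.mul_sum, ← Finset.sum_add_distrib]
  have e : (Fintype.card V : ℝ) ^ (k + l) = (Fintype.card V : ℝ) ^ (k + l - 1) * Fintype.card V := by
    rw [← pow_succ]; congr 1; omega
  rw [e, ← mul_assoc]
  apply mul_le_mul_of_nonneg_right _ hn'.le
  rw [mul_assoc, Finset.sum_mul, Finset.mul_sum]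
  have h1 : ∀ c, l * cnt k l A w v c + k * cnt k l A z v c ≤
      if c ∈ nbr A v then kap k l * (B c ^ (k + l - 1) * (Fintype.card V : ℝ) ^ (k + l - 1))
        else 0 := by
    intro c
    have i1 := cnt_in k l hl hk A hopp w hw v c
    have i2 := cnt_out k l hl hk A hopp z hz hz2 v c
    have hmem : c ∈ nbr A v ↔ A v c ∨ A c v := by simp [nbr]
    have key : (l * cnt k l A w v c + k * cnt k l A z v c) ≤
        if c ∈ nbr A v then kap k l * priv A c v ^ (k + l - 1) else 0 := by
      by_cases a1 : A v c
      · have a2 := hopp _ _ a1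
        rw [if_pos a1] at i1
        rw [if_neg a2] at i2
        rw [if_pos (hmem.2 (Or.inl a1))]
        linarith
      · rw [if_neg a1] at i1
        by_cases a2 : A c v
        · rw [if_pos a2] at i2
          rw [if_pos (hmem.2 (Or.inr a2))]
          linarith
        · rw [if_neg a2] at i2
          rw [if_neg (by rw [hmem]; tauto)]
          linarith
    refine key.trans ?_
    split_ifs with hc
    · have := kap_nonneg k l hl
      rw [← mul_pow]
      have h2 := priv_nonneg A c v
      gcongr
      rw [mul_comm]
      exact hB c hc
    · exact le_rfl
  refine (Finset.sum_le_sum fun c _ => h1 c).trans (le_of_eq ?_)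
  rw [← Finset.sum_filter]
  congr 1
  ext c; simp

lemma priv_le_compl {V : Type} [Fintype V] (A : V → V → Prop) (c v : V) :
    priv A c v ≤ Fintype.card V - ((nbr A v).card : ℝ) := by
  classical
  rw [le_sub_iff_add_le]
  unfold priv nbr
  rw [← Nat.cast_add, ← Finset.card_union_of_disjoint]
  · exact_mod_cast Finset.card_le_univ _
  · rw [Finset.disjoint_left]
    intro u hu hu'
    simp at hu hu'
    tauto

lemma priv_le_nbr {V : Type} [Fintype V] (A : V → V → Prop) (c v : V) :
    priv A c v ≤ ((nbr A c).card : ℝ) := by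
  classical
  unfold priv nbr
  exact_mod_cast Finset.card_le_card (fun u hu => by simp at hu ⊢; tauto)

lemma priv_le_rho {V : Type} [Fintype V] (A : V → V → Prop) (hn : 1 ≤ Fintype.card V) (c v : V) :
    priv A c v ≤ Fintype.card V * (1 - rho A v) := by
  have hn' : (0 : ℝ) < Fintype.card V := by exact_mod_cast hn
  have := priv_le_compl A c v
  rw [rho_eq, mul_sub, mul_one, mul_div_cancel₀ _ hn'.ne']
  exact this

lemma priv_le_rho' {V : Type} [Fintype V] (A : V → V → Prop) (hn : 1 ≤ Fintype.card V) (c v : V) :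
    priv A c v ≤ Fintype.card V * rho A c := by
  have hn' : (0 : ℝ) < Fintype.card V := by exact_mod_cast hn
  have := priv_le_nbr A c v
  rw [rho_eq, mul_div_cancel₀ _ hn'.ne']
  exact this

lemma leaf_x (k l : ℕ) (hl : 1 ≤ l) (hk : 1 ≤ k) {V : Type} [Fintype V] (A : V → V → Prop)
    (hopp : ∀ u v, A u v → ¬ A v u) (hn : 1 ≤ Fintype.card V)
    (z w : Fin (k + l + 1)) (hz : 1 ≤ z.val) (hz2 : z.val ≤ k) (hw : k + 1 ≤ w.val) (v : V) :
    l * sCond k l A w v + k * sCond k l A z v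
      ≤ kap k l * (rho A v * (1 - rho A v) ^ (k + l - 1)) := by
  refine (leaf_bound k l hl hk A hopp hn z w hz hz2 hw v (fun _ => 1 - rho A v)
    (fun c _ => priv_le_rho A hn c v)).trans (le_of_eq ?_)
  rw [Finset.sum_const, nsmul_eq_mul, mul_div_assoc]
  congr 1
  rw [mul_div_right_comm, ← rho_eq]

lemma leaf_y (k l : ℕ) (hl : 1 ≤ l) (hk : 1 ≤ k) {V : Type} [Fintype V] (A : V → V → Prop)
    (hopp : ∀ u v, A u v → ¬ A v u) (hn : 1 ≤ Fintype.card V)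
    (z w : Fin (k + l + 1)) (hz : 1 ≤ z.val) (hz2 : z.val ≤ k) (hw : k + 1 ≤ w.val) (v : V) :
    l * sCond k l A w v + k * sCond k l A z v
      ≤ kap k l * (rhoIn A (bigX A) v * (1 - rho A v) ^ (k + l - 1)
        + rhoIn A (bigY A) v * (1 / 2) ^ (k + l - 1)) := by
  classical
  have hn' : (0 : ℝ) < Fintype.card V := by exact_mod_cast hn
  refine (leaf_bound k l hl hk A hopp hn z w hz hz2 hw v
    (fun c => if c ∈ bigX A then 1 - rho A v else 1 / 2) ?_).trans (le_of_eq ?_)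
  · intro c _
    split_ifs with h
    · exact priv_le_rho A hn c v
    · refine (priv_le_rho' A hn c v).trans ?_
      have : rho A c < 1 / 2 := by simpa [bigX] using h
      gcongr
  · rw [mul_div_assoc]
    congr 1
    have : ∀ c ∈ nbr A v, (if c ∈ bigX A then 1 - rho A v else 1 / 2) ^ (k + l - 1) =
        if c ∈ bigX A then (1 - rho A v) ^ (k + l - 1) else (1 / 2) ^ (k + l - 1) := by
      intro c _
      split_ifs <;> rfl
    rw [Finset.sum_congr rfl this, Finset.sum_ite, Finset.sum_const, Finset.sum_const,
      nsmul_eq_mul, nsmul_eq_mul, rhoIn_eq, rhoIn_eq]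
    have e : (nbr A v).filter (· ∉ bigX A) = (nbr A v).filter (· ∈ bigY A) := by
      ext u; simp [bigY]
    rw [e]
    ring

lemma center_bound (k l : ℕ) {V : Type} [Fintype V] (A : V → V → Prop) (B : Set V) (v : V) :
    (Nat.card {φ : Fin (k + l + 1) → V // IsStarEmb k l A φ ∧ φ 0 = v ∧
      ∀ i : Fin (k + l + 1), 1 ≤ i.val → φ i ∈ B} : ℝ) / (Fintype.card V : ℝ) ^ (k + l) ≤
    rhoPIn A B v ^ k * rhoMIn A B v ^ l := by
  classical
  unfold rhoPIn rhoMIn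
  rw [div_pow, div_pow, div_mul_div_comm, ← pow_add]
  gcongr
  rw [← prod_center]
  have := card_le_pi (V := V) (m := k + l + 1)
      (fun φ => IsStarEmb k l A φ ∧ φ 0 = v ∧ ∀ i : Fin (k + l + 1), 1 ≤ i.val → φ i ∈ B)
      (fun i => if i.val = 0 then {v} else
        if i.val ≤ k then Finset.univ.filter fun u => A v u ∧ u ∈ B
        else Finset.univ.filter fun u => A u v ∧ u ∈ B) ?_
  · refine (Nat.cast_le (α := ℝ).2 this).trans (le_of_eq ?_)
    rw [Nat.cast_prod]
    apply Finset.prod_congr rfl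
    intro i _
    simp only [Nat.card_eq_fintype_card, Fintype.card_subtype]
    split_ifs <;> simp
  · rintro φ ⟨h, rfl, h'⟩ i
    split_ifs with h0 h2
    · have : i = 0 := Fin.ext h0
      simp [this]
    · simp only [Finset.mem_filter, Finset.mem_univ, true_and]
      exact ⟨emb_out h i (by omega) h2, h' i (by omega)⟩
    · simp only [Finset.mem_filter, Finset.mem_univ, true_and]
      exact ⟨emb_in h i (by omega), h' i (by omega)⟩

lemma lam0_amgm (k l : ℕ) (hl : 1 ≤ l) (a b : ℝ) (ha : 0 ≤ a) (hb : 0 ≤ b) :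
    a ^ k * b ^ l ≤ lam0 k l * (a + b) ^ (k + l) := by
  have := amgm k l a b ha hb
  unfold lam0
  have : (1 : ℝ) ≤ l := by exact_mod_cast hl
  rw [div_mul_eq_mul_div, le_div_iff₀ (by positivity)]
  exact amgm k l a b ha hb

lemma center_rho (k l : ℕ) (hl : 1 ≤ l) {V : Type} [Fintype V] (A : V → V → Prop)
    (hopp : ∀ u v, A u v → ¬ A v u) (v : V) :
    sCond k l A 0 v ≤ lam0 k l * rho A v ^ (k + l) := by
  classical
  have h := center_bound k l A Set.univ v
  have h2 := lam0_amgm k l hl (rhoPIn A Set.univ v) (rhoMIn A Set.univ v)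
    (by unfold rhoPIn; positivity) (by unfold rhoMIn; positivity)
  have e : rhoPIn A Set.univ v + rhoMIn A Set.univ v = rho A v := by
    unfold rhoPIn rhoMIn rho
    rw [← add_div]
    simp only [Nat.card_eq_fintype_card, Fintype.card_subtype]
    rw [← Nat.cast_add, ← Finset.card_union_of_disjoint]
    · congr 3
      ext u
      simp
    · rw [Finset.disjoint_left]
      intro u hu hu'
      simp at hu hu'
      exact hopp _ _ hu hu'
  rw [e] at h2
  refine le_trans ?_ (h.trans h2)
  unfold sCond
  simp

lemma center_x (k l : ℕ) (hl : 1 ≤ l) (hk : 1 ≤ k) {V : Type} [Fintype V] (A : V → V → Prop)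
    (hopp : ∀ u v, A u v → ¬ A v u) (hn : 1 ≤ Fintype.card V) (x : V) (D : ℝ)
    (hD : ∀ v ∈ bigX A, D ≤ rho A v) :
    sCond k l A 0 x ≤ rhoPIn A (bigY A) x ^ k * rhoMIn A (bigY A) x ^ l
      + kap k l * (alphaX A * (1 - D) ^ (k + l - 1)) := by
  classical
  have hn' : (0 : ℝ) < Fintype.card V := by exact_mod_cast hn
  have hk' : (0 : ℝ) < k := by exact_mod_cast hk
  have hl' : (0 : ℝ) < l := by exact_mod_cast hl
  have h := center_bound k l A (bigY A) x
  set XF : Finset V := Finset.univ.filter (· ∈ bigX A) with hXF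
  have hun : Nat.card {φ : Fin (k + l + 1) → V // IsStarEmb k l A φ ∧ φ 0 = x} ≤
      Nat.card {φ : Fin (k + l + 1) → V // IsStarEmb k l A φ ∧ φ 0 = x ∧
        ∀ i : Fin (k + l + 1), 1 ≤ i.val → φ i ∈ bigY A} +
      ∑ z : Fin (k + l), ∑ v ∈ XF,
        Nat.card {φ : Fin (k + l + 1) → V // IsStarEmb k l A φ ∧ φ z.succ = v ∧ φ 0 = x} := by
    simp only [Nat.card_eq_fintype_card, Fintype.card_subtype]
    have hsub : (Finset.univ.filter fun φ : Fin (k + l + 1) → V => IsStarEmb k l A φ ∧ φ 0 = x) ⊆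
        (Finset.univ.filter fun φ : Fin (k + l + 1) → V => IsStarEmb k l A φ ∧ φ 0 = x ∧
          ∀ i : Fin (k + l + 1), 1 ≤ i.val → φ i ∈ bigY A) ∪
        (Finset.univ : Finset (Fin (k + l))).biUnion fun z => XF.biUnion fun v =>
          Finset.univ.filter fun φ : Fin (k + l + 1) → V =>
            IsStarEmb k l A φ ∧ φ z.succ = v ∧ φ 0 = x := by
      intro φ hφ
      simp only [Finset.mem_filter, Finset.mem_univ, true_and] at hφ
      simp only [Finset.mem_union, Finset.mem_filter, Finset.mem_univ, true_and,
        Finset.mem_biUnion, hXF]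
      by_cases hall : ∀ i : Fin (k + l + 1), 1 ≤ i.val → φ i ∈ bigY A
      · exact Or.inl ⟨hφ.1, hφ.2, hall⟩
      · right
        push Not at hall
        obtain ⟨i, hi, hi2⟩ := hall
        refine ⟨⟨i.val - 1, by omega⟩, φ i, by simpa [bigY] using hi2, hφ.1, ?_, hφ.2⟩
        congr 1
        ext
        simp
        omega
    refine (Finset.card_le_card hsub).trans ((Finset.card_union_le _ _).trans ?_)
    gcongr
    refine Finset.card_biUnion_le.trans (Finset.sum_le_sum fun z _ => Finset.card_biUnion_le)
  have hun' := Nat.cast_le (α := ℝ).2 hun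
  push_cast at hun'
  have hsum : (∑ z : Fin (k + l), ∑ v ∈ XF,
        (Nat.card {φ : Fin (k + l + 1) → V // IsStarEmb k l A φ ∧ φ z.succ = v ∧ φ 0 = x} : ℝ)) ≤
      kap k l * (alphaX A * (1 - D) ^ (k + l - 1)) * (Fintype.card V : ℝ) ^ (k + l) := by
    change (∑ z : Fin (k + l), ∑ v ∈ XF, cnt k l A z.succ v x) ≤ _
    rw [Finset.sum_comm]
    have hv : ∀ v ∈ XF, (∑ z : Fin (k + l), cnt k l A z.succ v x) ≤
        kap k l * (Fintype.card V * (1 - D)) ^ (k + l - 1) := by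
      intro v hv
      rw [Fin.sum_univ_add]
      have hvX : v ∈ bigX A := by simpa [hXF] using hv
      have hp : priv A x v ≤ Fintype.card V * (1 - D) := by
        refine (priv_le_rho A hn x v).trans ?_
        have := hD v hvX
        gcongr
      have hp0 := priv_nonneg A x v
      have hkap := kap_nonneg k l hl
      have hpk : kap k l * priv A x v ^ (k + l - 1) ≤
        kap k l * (Fintype.card V * (1 - D)) ^ (k + l - 1) := by gcongr
      have hpk0 : 0 ≤ kap k l * priv A x v ^ (k + l - 1) := by positivity
      have s1 : (∑ i : Fin k, cnt k l A (Fin.castAdd l i).succ v x) ≤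
          if A x v then kap k l * priv A x v ^ (k + l - 1) else 0 := by
        have : ∀ i ∈ (Finset.univ : Finset (Fin k)), cnt k l A (Fin.castAdd l i).succ v x ≤
            (if A x v then kap k l * priv A x v ^ (k + l - 1) else 0) / k := by
          intro i _
          rw [le_div_iff₀ hk', mul_comm]
          have := i.isLt
          exact cnt_out k l hl hk A hopp _ (by simp) (by simp) v x
        refine (Finset.sum_le_sum this).trans (le_of_eq ?_)
        rw [Finset.sum_const, Finset.card_univ, Fintype.card_fin, nsmul_eq_mul]
        field_simp
      have s2 : (∑ i : Fin l, cnt k l A (Fin.natAdd k i).succ v x) ≤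
          if A v x then kap k l * priv A x v ^ (k + l - 1) else 0 := by
        have : ∀ i ∈ (Finset.univ : Finset (Fin l)), cnt k l A (Fin.natAdd k i).succ v x ≤
            (if A v x then kap k l * priv A x v ^ (k + l - 1) else 0) / l := by
          intro i _
          rw [le_div_iff₀ hl', mul_comm]
          have := i.isLt
          exact cnt_in k l hl hk A hopp _ (by simp) v x
        refine (Finset.sum_le_sum this).trans (le_of_eq ?_)
        rw [Finset.sum_const, Finset.card_univ, Fintype.card_fin, nsmul_eq_mul]
        field_simp
      by_cases a1 : A x v
      · rw [if_pos a1] at s1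
        rw [if_neg (hopp _ _ a1)] at s2
        linarith
      · rw [if_neg a1] at s1
        split_ifs at s2 <;> linarith
    refine (Finset.sum_le_sum hv).trans (le_of_eq ?_)
    rw [Finset.sum_const, nsmul_eq_mul, alphaX, muSet_eq, ← hXF]
    have e : (Fintype.card V : ℝ) ^ (k + l) =
        (Fintype.card V : ℝ) ^ (k + l - 1) * Fintype.card V := by
      rw [← pow_succ]; congr 1; omega
    rw [e, mul_pow]
    field_simp
  have hfin : sCond k l A 0 x ≤ (Nat.card {φ : Fin (k + l + 1) → V // IsStarEmb k l A φ ∧ φ 0 = x ∧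
        ∀ i : Fin (k + l + 1), 1 ≤ i.val → φ i ∈ bigY A} : ℝ) / (Fintype.card V : ℝ) ^ (k + l)
      + kap k l * (alphaX A * (1 - D) ^ (k + l - 1)) := by
    unfold sCond
    rw [div_add' _ _ _ (by positivity)]
    gcongr
    linarith
  linarith

lemma lam0_pos (k l : ℕ) (hl : 1 ≤ l) (hk : 1 ≤ k) : 0 < lam0 k l := by
  have : (0 : ℝ) < k := by exact_mod_cast hk
  have : (0 : ℝ) < l := by exact_mod_cast hl
  unfold lam0; positivity

lemma OPT_bound (k l : ℕ) (hl : 1 ≤ l) (hlk : l ≤ k) :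
    lam0 k l * (((k : ℝ) + l) / ((k : ℝ) + l + 1)) ^ (k + l) ≤ ((k : ℝ) + l + 1) * OPT k l := by
  have hk' : (1 : ℝ) ≤ k := by exact_mod_cast hl.trans hlk
  have hl' : (1 : ℝ) ≤ l := by exact_mod_cast hl
  rw [← div_le_iff₀' (by positivity)]
  have e1 : (1 : ℝ) - 1 / ((k : ℝ) + l + 1) = ((k : ℝ) + l) / ((k : ℝ) + l + 1) := by
    field_simp; ring
  unfold OPT
  split_ifs with h
  · subst h
    set a : ℝ := 1 / ((k : ℝ) + k + 1) with ha
    have ha0 : 0 ≤ a := by positivity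
    have ha1 : a ≤ 1 := by
      rw [ha, div_le_one (by positivity)]; linarith
    have hle : a * (1 - a) ^ (2 * k) + (1 - a) * a ^ (2 * k) ≤
      sSup {y : ℝ | ∃ a ∈ Set.Icc (0 : ℝ) 1, y = a * (1 - a) ^ (2 * k) + (1 - a) * a ^ (2 * k)} := by
      apply le_csSup
      · refine ⟨2, ?_⟩
        rintro y ⟨b, ⟨hb0, hb1⟩, rfl⟩
        have i1 : (1 - b) ^ (2 * k) ≤ 1 := pow_le_one₀ (by linarith) (by linarith)
        have i2 : b ^ (2 * k) ≤ 1 := pow_le_one₀ (by linarith) (by linarith)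
        have i3 : 0 ≤ (1 - b) ^ (2 * k) := pow_nonneg (by linarith) _
        have i4 : 0 ≤ b ^ (2 * k) := pow_nonneg (by linarith) _
        nlinarith
      · exact ⟨a, ⟨ha0, ha1⟩, rfl⟩
    have h3 : 0 ≤ (1 - a) * a ^ (2 * k) := mul_nonneg (by linarith) (by positivity)
    have hlam : lam0 k k = 1 / 2 ^ (2 * k) := by
      unfold lam0
      rw [← two_mul, ← two_mul, mul_pow, ← pow_add, ← two_mul]
      field_simp
    rw [hlam, mul_div_assoc]
    gcongr
    refine le_trans ?_ hle
    rw [e1, ← two_mul k] at *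
    rw [div_eq_mul_one_div, ← ha]
    linarith
  · set a : ℝ := 1 / ((k : ℝ) + l + 1) with ha
    have ha0 : 0 ≤ a := by positivity
    have ha1 : a ≤ 1 / 2 := by
      rw [ha]; apply one_div_le_one_div_of_le <;> linarith
    set C : ℝ := (((k : ℝ) - 1) ^ (k - 1) * (l : ℝ) ^ l / ((k : ℝ) + (l : ℝ) - 1) ^ (k + l - 1))
      with hC
    have hC0 : 0 ≤ C := by
      have : (0 : ℝ) ≤ (k : ℝ) - 1 := by linarith
      have : (0 : ℝ) ≤ (k : ℝ) + l - 1 := by linarith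
      positivity
    have hd1 : (k : ℝ) / ((k : ℝ) + l) ≤ 1 := by
      rw [div_le_one (by positivity)]; linarith
    have hle : a * (1 - a) ^ (k + l) * ((k : ℝ) / ((k : ℝ) + l)) ^ k *
          (1 - (k : ℝ) / ((k : ℝ) + l)) ^ l
        + C * (1 - a) * a ^ (k + l) * (1 - (k : ℝ) / ((k : ℝ) + l)) ≤
      sSup {y : ℝ | ∃ a ∈ Set.Icc (0 : ℝ) (1 / 2),
      ∃ d ∈ Set.Icc (0 : ℝ) ((k : ℝ) / ((k : ℝ) + (l : ℝ))),
      y = a * (1 - a) ^ (k + l) * d ^ k * (1 - d) ^ l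
        + C * (1 - a) * a ^ (k + l) * (1 - d)} := by
      apply le_csSup
      · refine ⟨1 * 1 * 1 * 1 + C * 1 * 1 * 1, ?_⟩
        rintro y ⟨b, ⟨hb0, hb1⟩, d, ⟨hd0, hd2⟩, rfl⟩
        have j1 : 0 ≤ 1 - b := by linarith
        have j2 : 0 ≤ 1 - d := by linarith
        have i1 : (1 - b) ^ (k + l) ≤ 1 := pow_le_one₀ (by linarith) (by linarith)
        have i2 : b ^ (k + l) ≤ 1 := pow_le_one₀ (by linarith) (by linarith)
        have i3 : (1 - d) ^ l ≤ 1 := pow_le_one₀ (by linarith) (by linarith)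
        have i4 : d ^ k ≤ 1 := pow_le_one₀ (by linarith) (by linarith)
        gcongr <;> linarith
      · exact ⟨a, ⟨ha0, ha1⟩, _, ⟨by positivity, le_rfl⟩, rfl⟩
    refine le_trans ?_ hle
    have h3 : 0 ≤ C * (1 - a) * a ^ (k + l) * (1 - (k : ℝ) / ((k : ℝ) + l)) :=
      mul_nonneg (mul_nonneg (mul_nonneg hC0 (by linarith)) (by positivity)) (by linarith)
    have e2 : 1 - (k : ℝ) / ((k : ℝ) + l) = (l : ℝ) / ((k : ℝ) + l) := by
      field_simp; ring
    have e3 : lam0 k l = ((k : ℝ) / ((k : ℝ) + l)) ^ k * ((l : ℝ) / ((k : ℝ) + l)) ^ l := by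
      unfold lam0
      rw [div_pow, div_pow, div_mul_div_comm, ← pow_add]
    rw [e2] at h3
    rw [e1] at h3
    rw [e1, e2, e3, div_eq_mul_one_div, ← ha]
    linarith

/-- `M = m^m/(m-1)^(m-1)`. -/
noncomputable def bM (m : ℕ) : ℝ := (m : ℝ) ^ m / ((m : ℝ) - 1) ^ (m - 1)

/-- `q = (m/(m+1))^m`. -/
noncomputable def bq (m : ℕ) : ℝ := ((m : ℝ) / ((m : ℝ) + 1)) ^ m

/-- `δ = 6/(5m)`. -/
noncomputable def bd (m : ℕ) : ℝ := 6 / (5 * (m : ℝ))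

lemma bM_pos (m : ℕ) (hm : 2 ≤ m) : 0 < bM m := by
  have : (2 : ℝ) ≤ m := by exact_mod_cast hm
  have : (0 : ℝ) < (m : ℝ) - 1 := by linarith
  unfold bM; positivity

lemma bM_six : bM 6 = 46656 / 3125 := by unfold bM; norm_num

lemma bq_six : bq 6 = 46656 / 117649 := by unfold bq; norm_num

lemma bd_six : bd 6 = 1 / 5 := by unfold bd; norm_num

lemma bM_le (m : ℕ) (hm : 2 ≤ m) : bM m ≤ 2.7183 * m := by
  have h2 : (2 : ℝ) ≤ m := by exact_mod_cast hm
  have h1 : (0 : ℝ) < (m : ℝ) - 1 := by linarith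
  unfold bM
  have e : (m : ℝ) ^ m = (m : ℝ) ^ (m - 1) * m := by rw [← pow_succ]; congr 1; omega
  have e2 : (m : ℝ) / ((m : ℝ) - 1) = 1 / ((m : ℝ) - 1) + 1 := by field_simp; ring
  have h3 : ((m : ℝ) / ((m : ℝ) - 1)) ^ (m - 1) ≤ Real.exp 1 := by
    rw [e2]
    have := Real.add_one_le_exp (1 / ((m : ℝ) - 1))
    calc _ ≤ Real.exp (1 / ((m : ℝ) - 1)) ^ (m - 1) := by gcongr
      _ = Real.exp 1 := by
        rw [← Real.exp_nat_mul]
        congr 1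
        rw [Nat.cast_sub (by omega)]
        push_cast
        field_simp
  rw [e, mul_div_right_comm, ← div_pow]
  have := Real.exp_one_lt_d9
  gcongr
  linarith

lemma bq_ge (m : ℕ) (hm : 1 ≤ m) : 0.3678 ≤ bq m := by
  have h1 : (1 : ℝ) ≤ m := by exact_mod_cast hm
  unfold bq
  have h3 : (((m : ℝ) + 1) / m) ^ m ≤ Real.exp 1 := by
    have e2 : ((m : ℝ) + 1) / m = 1 / (m : ℝ) + 1 := by field_simp; ring
    rw [e2]
    have := Real.add_one_le_exp (1 / (m : ℝ))
    calc _ ≤ Real.exp (1 / (m : ℝ)) ^ m := by gcongr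
      _ = Real.exp 1 := by
        rw [← Real.exp_nat_mul]
        congr 1
        field_simp
  have e : (m : ℝ) / ((m : ℝ) + 1) = (((m : ℝ) + 1) / m)⁻¹ := by rw [inv_div]
  rw [e, inv_pow]
  have := Real.exp_one_lt_d9
  rw [le_inv_comm₀ (by norm_num) (by positivity)]
  refine h3.trans (this.le.trans (by norm_num))

lemma bc_le (m : ℕ) (hm : 7 ≤ m) : bM m * (1 / 2) ^ (m - 1) ≤ 0.2975 := by
  have h := bM_le m (by omega)
  have key : ∀ j : ℕ, ((j : ℝ) + 7) * (1 / 2) ^ (j + 6) ≤ 7 / 64 := by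
    intro j
    induction j with
    | zero => norm_num
    | succ j ih =>
      rw [show j + 1 + 6 = (j + 6) + 1 by ring, pow_succ]
      push_cast
      have : (0 : ℝ) < (1 / 2) ^ (j + 6) := by positivity
      have hj : (0 : ℝ) ≤ j := by positivity
      nlinarith
  obtain ⟨j, rfl⟩ := Nat.exists_eq_add_of_le' hm
  have hj := key j
  rw [show j + 7 - 1 = j + 6 by omega]
  push_cast at h
  have : (0 : ℝ) < (1 / 2) ^ (j + 6) := by positivity
  calc _ ≤ 2.7183 * ((j : ℝ) + 7) * (1 / 2) ^ (j + 6) := by gcongr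
    _ ≤ _ := by linarith

lemma bd_exp (m : ℕ) (hm : 7 ≤ m) : (1 - bd m) ^ m ≤ 0.3016 := by
  have h7 : (7 : ℝ) ≤ m := by exact_mod_cast hm
  have hd : bd m ≤ 1 := by
    unfold bd; rw [div_le_one (by positivity)]; linarith
  have h1 := Real.add_one_le_exp (-bd m)
  have h2 : (1 - bd m) ^ m ≤ Real.exp (-(6 / 5)) := by
    calc _ ≤ Real.exp (-bd m) ^ m := by
            apply pow_le_pow_left₀ (by linarith); linarith
      _ = _ := by
        rw [← Real.exp_nat_mul]
        congr 1
        unfold bd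
        field_simp
  refine h2.trans ?_
  rw [Real.exp_neg]
  have h3 : Real.exp (6 / 5) = Real.exp 1 * Real.exp (1 / 5) := by
    rw [← Real.exp_add]; norm_num
  have h4 := Real.exp_one_gt_d9
  have h5 := Real.quadratic_le_exp_of_nonneg (x := 1 / 5) (by norm_num)
  have h6 : (3.316 : ℝ) ≤ Real.exp (6 / 5) := by
    rw [h3]
    calc (3.316 : ℝ) ≤ 2.7182818283 * (1 + 1 / 5 + (1 / 5) ^ 2 / 2) := by norm_num
      _ ≤ _ := by gcongr
  calc (Real.exp (6 / 5))⁻¹ ≤ (3.316 : ℝ)⁻¹ := by gcongr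
    _ ≤ _ := by norm_num

lemma bd_le (m : ℕ) (hm : 7 ≤ m) : bd m ≤ 6 / 35 := by
  have h7 : (7 : ℝ) ≤ m := by exact_mod_cast hm
  unfold bd
  gcongr
  linarith

lemma bd_pos (m : ℕ) (hm : 1 ≤ m) : 0 < bd m := by
  have h7 : (1 : ℝ) ≤ m := by exact_mod_cast hm
  unfold bd
  positivity

lemma b3_le (m : ℕ) (hm : 7 ≤ m) : bM m * (3 / 10) ^ (m - 1) ≤ 0.014 := by
  have h := bc_le m hm
  have hM := bM_pos m (by omega)
  have e : ((3 : ℝ) / 10) ^ (m - 1) = (1 / 2) ^ (m - 1) * (3 / 5) ^ (m - 1) := by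
    rw [← mul_pow]; norm_num
  have h2 : ((3 : ℝ) / 5) ^ (m - 1) ≤ (3 / 5) ^ 6 :=
    pow_le_pow_of_le_one (by norm_num) (by norm_num) (by omega)
  rw [e, ← mul_assoc]
  calc _ ≤ (0.2975 : ℝ) * (3 / 5) ^ 6 := by gcongr
    _ ≤ _ := by norm_num

lemma num1 (m : ℕ) (hm : 6 ≤ m) (ρ : ℝ) (h0 : 1 / 2 ≤ ρ) (h1 : ρ ≤ 1)
    (h : bq m ≤ ρ ^ m + bM m * (ρ * (1 - ρ) ^ (m - 1))) : 1 - bd m ≤ ρ := by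
  by_contra! hc
  have hM := bM_pos m (by omega)
  have h1' : 0 ≤ 1 - ρ := by linarith
  rcases le_total ρ (7 / 10) with hr | hr
  · have a1 : ρ ^ m ≤ (7 / 10) ^ m := by gcongr
    have a2 : ρ * (1 - ρ) ^ (m - 1) ≤ (1 / 2) * (1 / 2) ^ (m - 1) := by
      obtain ⟨j, rfl⟩ := Nat.exists_eq_add_of_le' (show 2 ≤ m by omega)
      rw [show j + 2 - 1 = j + 1 by omega, pow_succ, pow_succ]
      have b1 : (1 - ρ) ^ j ≤ (1 / 2) ^ j := by gcongr; linarith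
      have b2 : ρ * (1 - ρ) ≤ 1 / 4 := by nlinarith [sq_nonneg (ρ - 1 / 2)]
      have b3 : 0 ≤ ρ * (1 - ρ) := by nlinarith
      calc ρ * ((1 - ρ) ^ j * (1 - ρ)) = (ρ * (1 - ρ)) * (1 - ρ) ^ j := by ring
        _ ≤ (1 / 4) * (1 / 2) ^ j := by gcongr
        _ = _ := by ring
    have a3 : bM m * (ρ * (1 - ρ) ^ (m - 1)) ≤ bM m * ((1 / 2) * (1 / 2) ^ (m - 1)) := by gcongr
    rcases Nat.lt_or_ge m 7 with hm7 | hm7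
    · obtain rfl : m = 6 := by omega
      rw [bM_six] at a3 h
      rw [bq_six] at h
      norm_num at a1 a3 h
      linarith
    · have a4 : ((7 : ℝ) / 10) ^ m ≤ (7 / 10) ^ 7 :=
        pow_le_pow_of_le_one (by norm_num) (by norm_num) hm7
      have a5 := bc_le m hm7
      have a6 := bq_ge m (by omega)
      norm_num at a4 a5 a6
      linarith
  · have a1 : ρ ^ m ≤ (1 - bd m) ^ m := by gcongr
    have a2 : (1 - ρ) ^ (m - 1) ≤ (3 / 10) ^ (m - 1) := by gcongr; linarith
    have a3 : ρ * (1 - ρ) ^ (m - 1) ≤ 1 * (3 / 10) ^ (m - 1) := by gcongr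
    have a4 : bM m * (ρ * (1 - ρ) ^ (m - 1)) ≤ bM m * (1 * (3 / 10) ^ (m - 1)) := by gcongr
    rcases Nat.lt_or_ge m 7 with hm7 | hm7
    · obtain rfl : m = 6 := by omega
      rw [bM_six] at a4 h
      rw [bq_six] at h
      rw [bd_six] at a1
      norm_num at a1 a4 h
      linarith
    · have a5 := b3_le m hm7
      have a6 := bq_ge m (by omega)
      have a7 := bd_exp m hm7
      norm_num at a5 a6 a7
      linarith

lemma num2_aux (m : ℕ) (s t β : ℝ) (hs : s ≤ β) (ht : β ≤ t) (hβ : β ≤ 1 / 2) (hM : 0 < bM m)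
    (h : bq m ≤ (1 - β) ^ m + bM m * (β * (1 / 2) ^ (m - 1)) + (1 / 2) ^ m) :
    bq m ≤ (1 - s) ^ m + (bM m * (1 / 2) ^ (m - 1)) * t + (1 / 2) ^ m := by
  have a1 : (1 - β) ^ m ≤ (1 - s) ^ m := by
    apply pow_le_pow_left₀ <;> linarith
  have a2 : bM m * (β * (1 / 2) ^ (m - 1)) ≤ (bM m * (1 / 2) ^ (m - 1)) * t := by
    rw [mul_comm β, ← mul_assoc]
    gcongr
  linarith

lemma num2 (m : ℕ) (hm : 6 ≤ m) (β : ℝ) (h1 : β ≤ 1 / 2)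
    (h : bq m ≤ (1 - β) ^ m + bM m * (β * (1 / 2) ^ (m - 1)) + (1 / 2) ^ m) : β ≤ bd m := by
  by_contra! hc
  have hM := bM_pos m (by omega)
  rcases Nat.lt_or_ge m 7 with hm7 | hm7
  · obtain rfl : m = 6 := by omega
    rw [bd_six] at hc
    rcases le_total β (23 / 100) with h2 | h2
    · have := num2_aux 6 _ _ β hc.le h2 h1 hM h
      rw [bM_six, bq_six] at this
      norm_num at this
    rcases le_total β (35 / 100) with h3 | h3
    · have := num2_aux 6 _ _ β h2 h3 h1 hM h
      rw [bM_six, bq_six] at this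
      norm_num at this
    · have := num2_aux 6 _ _ β h3 h1 h1 hM h
      rw [bM_six, bq_six] at this
      norm_num at this
  · have a5 := bc_le m hm7
    have a6 := bq_ge m (by omega)
    have a7 := bd_exp m hm7
    have a8 : ((1 : ℝ) / 2) ^ m ≤ (1 / 2) ^ 7 :=
      pow_le_pow_of_le_one (by norm_num) (by norm_num) hm7
    rcases le_total β (18 / 100) with h2 | h2
    · have := num2_aux m _ _ β hc.le h2 h1 hM h
      norm_num at a5 a6 a7 a8 this
      linarith
    rcases le_total β (35 / 100) with h3 | h3
    · have := num2_aux m _ _ β h2 h3 h1 hM h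
      have a9 : ((1 : ℝ) - 18 / 100) ^ m ≤ (1 - 18 / 100) ^ 7 :=
        pow_le_pow_of_le_one (by norm_num) (by norm_num) hm7
      norm_num at a5 a6 a7 a8 a9 this
      linarith
    · have := num2_aux m _ _ β h3 h1 h1 hM h
      have a9 : ((1 : ℝ) - 35 / 100) ^ m ≤ (1 - 35 / 100) ^ 7 :=
        pow_le_pow_of_le_one (by norm_num) (by norm_num) hm7
      norm_num at a5 a6 a7 a8 a9 this
      linarith

lemma num3 (m : ℕ) (hm : 6 ≤ m) (α r β : ℝ) (hβ : β ≤ bd m) (hr : r ≤ α) (hα : 0 < α)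
    (h : bq m ≤ (1 / 2) ^ m + bM m * (r + β * (1 / 2) ^ (m - 1))) :
    bM m / α * bd m ^ (m - 1) ≤
      bq m - 2 * (bM m * bd m ^ (m - 1)) - 2 ^ m / m * bd m ^ (m - 2) := by
  have hM := bM_pos m (by omega)
  have h1 : bq m ≤ (1 / 2) ^ m + bM m * α + (bM m * (1 / 2) ^ (m - 1)) * bd m := by
    have : bM m * (r + β * (1 / 2) ^ (m - 1)) ≤ bM m * (α + bd m * (1 / 2) ^ (m - 1)) := by gcongr
    linarith
  have e : bM m / α * bd m ^ (m - 1) = bM m ^ 2 * bd m ^ (m - 1) / (bM m * α) := by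
    field_simp
  rw [e, div_le_iff₀ (by positivity)]
  rcases Nat.lt_or_ge m 7 with hm7 | hm7
  · obtain rfl : m = 6 := by omega
    rw [bM_six, bq_six, bd_six] at *
    norm_num at h1 ⊢
    linarith
  · have a5 := bc_le m hm7
    have a6 := bq_ge m (by omega)
    have a8 : ((1 : ℝ) / 2) ^ m ≤ (1 / 2) ^ 7 :=
      pow_le_pow_of_le_one (by norm_num) (by norm_num) hm7
    have d0 := bd_pos m (by omega)
    have d1 := bd_le m hm7
    have h7 : (7 : ℝ) ≤ m := by exact_mod_cast hm7
    have h2 : (0.3 : ℝ) ≤ bM m * α := by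
      have : (bM m * (1 / 2) ^ (m - 1)) * bd m ≤ 0.2975 * (6 / 35) := by gcongr
      norm_num at *
      linarith
    have b1 : bM m * bd m ^ (m - 1) ≤ 0.014 := by
      refine le_trans ?_ (b3_le m hm7)
      gcongr
      linarith
    have b2 : 2 ^ m / m * bd m ^ (m - 2) ≤ 0.01 := by
      have e1 : (2 : ℝ) ^ m = 4 * 2 ^ (m - 2) := by
        rw [show (4 : ℝ) = 2 ^ 2 by norm_num, ← pow_add]; congr 1; omega
      have e2 : 2 ^ m / m * bd m ^ (m - 2) = 4 / m * (2 * bd m) ^ (m - 2) := by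
        rw [e1, mul_pow]; ring
      rw [e2]
      have c1 : (2 * bd m) ^ (m - 2) ≤ (12 / 35) ^ (m - 2) := by gcongr; linarith
      have c2 : ((12 : ℝ) / 35) ^ (m - 2) ≤ (12 / 35) ^ 5 :=
        pow_le_pow_of_le_one (by norm_num) (by norm_num) (by omega)
      calc _ ≤ 4 / 7 * ((12 : ℝ) / 35) ^ 5 := by gcongr; exact c1.trans c2
        _ ≤ _ := by norm_num
    have b3 : bM m ^ 2 * bd m ^ (m - 1) ≤ 0.01 := by
      have e1 : bd m ^ (m - 1) = bd m ^ 2 * bd m ^ (m - 3) := by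
        rw [← pow_add]; congr 1; omega
      rw [e1, ← mul_assoc, ← mul_pow]
      have c0 : bM m * bd m ≤ 3.2620 := by
        calc _ ≤ 2.7183 * m * bd m := by gcongr; exact bM_le m (by omega)
          _ = 2.7183 * (6 / 5) := by unfold bd; field_simp
          _ ≤ _ := by norm_num
      have c1 : bd m ^ (m - 3) ≤ (6 / 35) ^ (m - 3) := by gcongr
      have c2 : ((6 : ℝ) / 35) ^ (m - 3) ≤ (6 / 35) ^ 4 :=
        pow_le_pow_of_le_one (by norm_num) (by norm_num) (by omega)
      calc _ ≤ (3.2620 : ℝ) ^ 2 * (6 / 35) ^ 4 := by gcongr; exact c1.trans c2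
        _ ≤ _ := by norm_num
    have b4 : (0.3 : ℝ) ≤ bq m - 2 * (bM m * bd m ^ (m - 1)) - 2 ^ m / m * bd m ^ (m - 2) := by
      norm_num at *
      linarith
    calc bM m ^ 2 * bd m ^ (m - 1) ≤ 0.3 * 0.3 := b3.trans (by norm_num)
      _ ≤ _ := by gcongr

lemma choose_ge (k l : ℕ) (hk : 1 ≤ k) (hl : 1 ≤ l) : k + l ≤ (k + l).choose k := by
  obtain ⟨j, rfl⟩ := Nat.exists_eq_add_of_le' hk
  induction l, hl using Nat.le_induction with
  | base => rw [Nat.choose_succ_self_right]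
  | succ l hl ih =>
    rw [← add_assoc, Nat.choose_succ_succ']
    have : 0 < (j + 1 + l).choose j := Nat.choose_pos (by omega)
    omega

lemma kap_eq (k l : ℕ) (hl : 1 ≤ l) (hk : 1 ≤ k) : kap k l = bM (k + l) * lam0 k l := by
  have hk' : (1 : ℝ) ≤ k := by exact_mod_cast hk
  have hl' : (1 : ℝ) ≤ l := by exact_mod_cast hl
  have : (0 : ℝ) < (k : ℝ) + l - 1 := by linarith
  unfold kap bM lam0
  push_cast
  field_simp

lemma lam1_le (k l : ℕ) (hl : 1 ≤ l) (hk : 1 ≤ k) : lam1 k l ≤ kap k l := by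
  have hk' : (1 : ℝ) ≤ k := by exact_mod_cast hk
  have hl' : (1 : ℝ) ≤ l := by exact_mod_cast hl
  have : (0 : ℝ) < (k : ℝ) + l - 1 := by linarith
  have h := pow_pred_le l hl
  rw [Nat.cast_sub hl, Nat.cast_one] at h
  unfold lam1 kap
  rw [mul_assoc]
  gcongr

lemma lam0_ge (k l : ℕ) (hl : 1 ≤ l) : 1 ≤ lam0 k l * 2 ^ (k + l) := by
  have := lam0_amgm k l hl 1 1 (by norm_num) (by norm_num)
  norm_num at this
  exact this

lemma rho_le_one {V : Type} [Fintype V] (A : V → V → Prop) (v : V) : rho A v ≤ 1 := by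
  rw [rho_eq]
  apply div_le_one_of_le₀ _ (by positivity)
  exact_mod_cast Finset.card_le_univ _

lemma rho_split {V : Type} [Fintype V] (A : V → V → Prop) (v : V) :
    rhoIn A (bigX A) v + rhoIn A (bigY A) v = rho A v := by
  classical
  rw [rhoIn_eq, rhoIn_eq, rho_eq, ← add_div, ← Nat.cast_add]
  congr 2
  have e : (nbr A v).filter (· ∈ bigY A) = (nbr A v).filter (· ∉ bigX A) := by
    ext u; simp [bigY]
  rw [e]
  exact Finset.card_filter_add_card_filter_not (s := nbr A v) (· ∈ bigX A)

lemma rhoIn_le_alpha {V : Type} [Fintype V] (A : V → V → Prop) (v : V) :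
    rhoIn A (bigX A) v ≤ alphaX A := by
  classical
  rw [rhoIn_eq, alphaX, muSet_eq]
  gcongr
  simp

lemma alpha_pos {V : Type} [Fintype V] (A : V → V → Prop) (hX : (bigX A).Nonempty) :
    0 < alphaX A := by
  classical
  rw [alphaX, muSet_eq]
  obtain ⟨x, hx⟩ := hX
  have : 0 < Fintype.card V := Fintype.card_pos_iff.2 ⟨x⟩
  have : 0 < (Finset.univ.filter (· ∈ bigX A)).card := Finset.card_pos.2 ⟨x, by simp [hx]⟩
  positivity

lemma alpha_le_one {V : Type} [Fintype V] (A : V → V → Prop) : alphaX A ≤ 1 := by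
  classical
  rw [alphaX, muSet_eq]
  apply div_le_one_of_le₀ _ (by positivity)
  exact_mod_cast Finset.card_le_univ _

theorem stmt15 (k l : ℕ) (hl : 1 ≤ l) (hlk : l ≤ k) (hm : 6 ≤ k + l)
    (V : Type) [Fintype V] (A : V → V → Prop)
    (hirr : Irreflexive A) (hopp : ∀ u v, A u v → ¬ A v u) (hn : 1 ≤ Fintype.card V)
    (hvert : ∀ v : V, OPT k l ≤ sVert k l A v)
    (hX : (bigX A).Nonempty) (hY : (bigY A).Nonempty) :
    S2min k l A ≥ lam1 k l * ((1 - alphaX A) / alphaX A) * betaY A ^ (k + l - 1) := by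
  classical
  have hk : 1 ≤ k := hl.trans hlk
  have hlam := lam0_pos k l hl hk
  have hkap := kap_eq k l hl hk
  have hMpos := bM_pos (k + l) (by omega)
  have hd0 := bd_pos (k + l) (by omega)
  have hm' : (6 : ℝ) ≤ (k : ℝ) + l := by exact_mod_cast hm
  have hα0 := alpha_pos A hX
  have hα1 := alpha_le_one A
  -- the basic inequality at a vertex
  obtain ⟨w, hw, hsw⟩ : ∃ w : Fin (k + l + 1), k + 1 ≤ w.val ∧ ∀ v, sVert k l A v =
      (sCond k l A 0 v + l * sCond k l A w v + k * sCond k l A 1 v) / ((k : ℝ) + l + 1) := by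
    refine ⟨Fin.ofNat (k + l + 1) (k + 1), ?_, fun v => rfl⟩
    simp only [Fin.val_ofNat]
    rw [Nat.mod_eq_of_lt (by omega)]
  have hone : (1 : Fin (k + l + 1)).val = 1 := by
    rw [Fin.val_one']
    exact Nat.mod_eq_of_lt (by omega)
  have hbase : ∀ v, lam0 k l * bq (k + l) ≤
      sCond k l A 0 v + (l * sCond k l A w v + k * sCond k l A 1 v) := by
    intro v
    have h1 := OPT_bound k l hl hlk
    have h2 := hvert v
    rw [hsw, le_div_iff₀ (by positivity)] at h2
    unfold bq
    push_cast
    linarith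
  have hleafx := fun v => leaf_x k l hl hk A hopp hn 1 w (by omega) (by omega) hw v
  have hleafy := fun v => leaf_y k l hl hk A hopp hn 1 w (by omega) (by omega) hw v
  -- lower bound on D
  have hDall : ∀ x ∈ bigX A, 1 - bd (k + l) ≤ rho A x := by
    intro x hx
    apply num1 (k + l) hm _ hx (rho_le_one A x)
    have h1 := hbase x
    have h2 := center_rho k l hl A hopp x
    have h3 := hleafx x
    rw [hkap] at h3
    have : lam0 k l * bq (k + l) ≤ lam0 k l * (rho A x ^ (k + l) +
        bM (k + l) * (rho A x * (1 - rho A x) ^ (k + l - 1))) := by linarith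
    exact le_of_mul_le_mul_left this hlam
  have hD : 1 - bd (k + l) ≤ Dmin A := by
    apply le_csInf (hX.image _)
    rintro _ ⟨x, hx, rfl⟩
    exact hDall x hx
  have hD1 : Dmin A ≤ 1 := by
    obtain ⟨x, hx⟩ := hX
    have : Dmin A ≤ rho A x :=
      csInf_le (Set.toFinite (rho A '' bigX A)).bddBelow (Set.mem_image_of_mem _ hx)
    exact this.trans (rho_le_one A x)
  -- lower bound on S1
  have hS1 : lam0 k l * (bq (k + l) - 2 * (bM (k + l) * bd (k + l) ^ (k + l - 1))) ≤
      S1min k l A := by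
    apply le_csInf (hX.image _)
    rintro _ ⟨x, hx, rfl⟩
    have h1 := hbase x
    have h2 := center_x k l hl hk A hopp hn x (1 - bd (k + l)) hDall
    have h3 := hleafx x
    have h4 : rho A x * (1 - rho A x) ^ (k + l - 1) ≤ 1 * bd (k + l) ^ (k + l - 1) := by
      have i1 := rho_le_one A x
      have i2 := hDall x hx
      have i3 : 0 ≤ 1 - rho A x := by linarith
      gcongr
      linarith
    have h5 : alphaX A * (1 - (1 - bd (k + l))) ^ (k + l - 1) ≤
        1 * bd (k + l) ^ (k + l - 1) := by
      rw [sub_sub_cancel]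
      gcongr
    rw [hkap] at h2 h3
    have hp : 0 < bM (k + l) * lam0 k l := by positivity
    have h6 := mul_le_mul_of_nonneg_left h4 hp.le
    have h7 := mul_le_mul_of_nonneg_left h5 hp.le
    simp only
    linarith
  -- the vertex attaining beta
  obtain ⟨y, hy, hyβ⟩ : betaY A ∈ (fun y => rhoIn A (bigY A) y) '' bigY A :=
    (hY.image _).csSup_mem (Set.toFinite _)
  simp only at hyβ
  have hsplit := rho_split A y
  rw [hyβ] at hsplit
  have hrα := rhoIn_le_alpha A y
  have hβ0 : 0 ≤ betaY A := by rw [← hyβ]; unfold rhoIn; positivity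
  have hr0 : 0 ≤ rhoIn A (bigX A) y := by unfold rhoIn; positivity
  have hyh : rho A y < 1 / 2 := by simpa [bigY, bigX] using hy
  have hyineq : bq (k + l) ≤ rho A y ^ (k + l) + bM (k + l) *
      (rhoIn A (bigX A) y * (1 - rho A y) ^ (k + l - 1)
        + betaY A * (1 / 2) ^ (k + l - 1)) := by
    have h1 := hbase y
    have h2 := center_rho k l hl A hopp y
    have h3 := hleafy y
    rw [hkap, hyβ] at h3
    refine le_of_mul_le_mul_left ?_ hlam
    linarith
  have hρ0 : 0 ≤ rho A y := by linarith
  have hρm : rho A y ^ (k + l) ≤ (1 / 2) ^ (k + l) := by gcongr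
  have hβd : betaY A ≤ bd (k + l) := by
    apply num2 (k + l) hm _ (by linarith)
    have h1 := amgm 1 (k + l - 1) (rhoIn A (bigX A) y) (1 - rho A y) hr0 (by linarith)
    have e : 1 + (k + l - 1) = k + l := by omega
    have e' : ((k + l - 1 : ℕ) : ℝ) = ((k + l : ℕ) : ℝ) - 1 := by
      rw [Nat.cast_sub (by omega)]; push_cast; ring
    rw [e, e'] at h1
    have hpos : (0 : ℝ) < ((k + l : ℕ) : ℝ) - 1 := by push_cast; linarith
    have e2 : rhoIn A (bigX A) y + (1 - rho A y) = 1 - betaY A := by linarith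
    rw [e2] at h1
    simp only [Nat.cast_one, one_pow, one_mul, pow_one, add_sub_cancel] at h1
    have h2 : bM (k + l) * (rhoIn A (bigX A) y * (1 - rho A y) ^ (k + l - 1)) ≤
        (1 - betaY A) ^ (k + l) := by
      unfold bM
      rw [div_mul_eq_mul_div, div_le_iff₀ (by positivity)]
      linarith
    linarith
  have hfin := num3 (k + l) hm (alphaX A) (rhoIn A (bigX A) y) (betaY A) hβd hrα hα0 (by
    have : (1 - rho A y) ^ (k + l - 1) ≤ 1 := pow_le_one₀ (by linarith) (by linarith)
    have h2 : rhoIn A (bigX A) y * (1 - rho A y) ^ (k + l - 1) ≤ rhoIn A (bigX A) y :=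
      mul_le_of_le_one_right hr0 this
    have h3 := mul_le_mul_of_nonneg_left h2 hMpos.le
    linarith)
  -- the subtracted term
  have hsub : (((k : ℝ) + l - 1) / (((k : ℝ) + l + 1) * (Nat.choose (k + l) k : ℝ)))
    * (alphaX A + betaY A) * (1 - alphaX A) * (1 - Dmin A) ^ (k + l - 2) ≤
      lam0 k l * (2 ^ (k + l) / ((k + l : ℕ) : ℝ) * bd (k + l) ^ (k + l - 2)) := by
    have hch : ((k : ℝ) + l) ≤ (Nat.choose (k + l) k : ℝ) := by
      exact_mod_cast choose_ge k l hk hl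
    have h1 : ((k : ℝ) + l - 1) / (((k : ℝ) + l + 1) * (Nat.choose (k + l) k : ℝ)) ≤
        1 / ((k : ℝ) + l) := by
      rw [div_le_div_iff₀ (mul_pos (by linarith) (by linarith)) (by linarith)]
      nlinarith
    have h1' : 0 ≤ ((k : ℝ) + l - 1) / (((k : ℝ) + l + 1) * (Nat.choose (k + l) k : ℝ)) :=
      div_nonneg (by linarith) (mul_nonneg (by linarith) (by linarith))
    have h2 : (alphaX A + betaY A) * (1 - alphaX A) ≤ 1 := by
      nlinarith [sq_nonneg (alphaX A)]
    have h2' : 0 ≤ (alphaX A + betaY A) * (1 - alphaX A) :=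
      mul_nonneg (by linarith) (by linarith)
    have h3' : 0 ≤ 1 - Dmin A := by linarith
    have h3 : (1 - Dmin A) ^ (k + l - 2) ≤ bd (k + l) ^ (k + l - 2) := by
      gcongr
      linarith
    rw [mul_assoc (_ / _) (alphaX A + betaY A)]
    calc _ ≤ 1 / ((k : ℝ) + l) * 1 * bd (k + l) ^ (k + l - 2) := by gcongr
      _ = 1 * (1 / ((k : ℝ) + l) * bd (k + l) ^ (k + l - 2)) := by ring
      _ ≤ (lam0 k l * 2 ^ (k + l)) * (1 / ((k : ℝ) + l) * bd (k + l) ^ (k + l - 2)) := by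
        gcongr
        exact lam0_ge k l hl
      _ = _ := by push_cast; ring
  have hrhs : lam1 k l * ((1 - alphaX A) / alphaX A) * betaY A ^ (k + l - 1) ≤
      lam0 k l * (bM (k + l) / alphaX A * bd (k + l) ^ (k + l - 1)) := by
    have h1 := lam1_le k l hl hk
    have h0 : 0 ≤ (1 - alphaX A) / alphaX A := div_nonneg (by linarith) hα0.le
    have h2 : (1 - alphaX A) / alphaX A ≤ 1 / alphaX A := by
      gcongr
      linarith
    rw [hkap] at h1
    calc _ ≤ (bM (k + l) * lam0 k l) * (1 / alphaX A) * bd (k + l) ^ (k + l - 1) := by gcongr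
      _ = _ := by ring
  have hfin2 := mul_le_mul_of_nonneg_left hfin hlam.le
  unfold S2min
  linarith
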